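/- For every λ ∈ κ and every n ≥ 1, the kernel of the Ā-module homomorphism πₙ^λ: Āⁿ → M(λ)ₙ sending the standard basis vector eᵢ to uᵢ (the projective cover of M(λ)ₙ) is isomorphic as an Ā-module to M(−λ)ₙ. In particular the first syzygy of M(λ)ₙ over Ā is M(−λ)ₙ. -/

import Mathlib

open LinearMap TensorProduct

noncomputable section

namespace HellerKronecker

variable (R : Type) [CommRing R]

/-! ### Coordinate functionals on `Fin n → Fin 4 → R` (the underlying module of `Aⁿ`,
`Zₙ^λ` and `Zₙ^∞`, in their standard `𝒪`-bases). -/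

/-- The `(i,j)`-coordinate functional. -/
def ent (n : ℕ) (i : Fin n) (j : Fin 4) : (Fin n → Fin 4 → R) →ₗ[R] R :=
  (LinearMap.proj j : (Fin 4 → R) →ₗ[R] R).comp
    (LinearMap.proj i : (Fin n → Fin 4 → R) →ₗ[R] (Fin 4 → R))

/-- The `(i+1,j)`-coordinate functional (zero at the boundary). -/
def entSucc (n : ℕ) (i : Fin n) (j : Fin 4) : (Fin n → Fin 4 → R) →ₗ[R] R :=
  if h : i.val + 1 < n then ent R n ⟨i.val + 1, h⟩ j else 0

/-- The `(i-1,j)`-coordinate functional (zero at the boundary). -/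
def entPred (n : ℕ) (i : Fin n) (j : Fin 4) : (Fin n → Fin 4 → R) →ₗ[R] R :=
  if 0 < i.val then ent R n ⟨i.val - 1, lt_of_le_of_lt (Nat.sub_le _ _) i.isLt⟩ j else 0

/-- The standard basis vector with a `1` in position `(i,j)`. -/
def bas (n : ℕ) (i : Fin n) (j : Fin 4) : Fin n → Fin 4 → R :=
  Pi.single i (Pi.single j 1)

/-- The action of `X` on `Aⁿ = (𝒪[X,Y]/(X²,Y²))ⁿ` in the basis `eᵢ, Xeᵢ, Yeᵢ, XYeᵢ`.
This is also the action of `X` on the Heller lattice `Zₙ^λ` in the basis `a_{i,j}`. -/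
def opAX (n : ℕ) : (Fin n → Fin 4 → R) →ₗ[R] (Fin n → Fin 4 → R) :=
  LinearMap.pi fun i => LinearMap.pi fun j => ![0, ent R n i 0, 0, ent R n i 2] j

/-- The action of `Y` on `Aⁿ` in the basis `eᵢ, Xeᵢ, Yeᵢ, XYeᵢ`. -/
def opAY (n : ℕ) : (Fin n → Fin 4 → R) →ₗ[R] (Fin n → Fin 4 → R) :=
  LinearMap.pi fun i => LinearMap.pi fun j => ![0, 0, ent R n i 0, ent R n i 1] j

/-- The action of `X` on the Heller lattice `Zₙ^λ` in the `𝒪`-basis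
`a_{i,1} = εeᵢ, a_{i,2} = εXeᵢ, a_{i,3} = Yeᵢ − λXeᵢ − Xe_{i−1}, a_{i,4} = XYeᵢ`. -/
def opZlX (n : ℕ) : (Fin n → Fin 4 → R) →ₗ[R] (Fin n → Fin 4 → R) := opAX R n

/-- The action of `Y` on the Heller lattice `Zₙ^λ` (uniformizer `e`, parameter `l`). -/
def opZlY (n : ℕ) (e l : R) : (Fin n → Fin 4 → R) →ₗ[R] (Fin n → Fin 4 → R) :=
  LinearMap.pi fun i => LinearMap.pi fun j =>
    ![0, l • ent R n i 0 + entSucc R n i 0, e • ent R n i 0,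
      e • ent R n i 1 - l • ent R n i 2 - entSucc R n i 2] j

/-- The action of `X` on the Heller lattice `Zₙ^∞` in the `𝒪`-basis `b_{i,j}`. -/
def opZiX (n : ℕ) (e : R) : (Fin n → Fin 4 → R) →ₗ[R] (Fin n → Fin 4 → R) :=
  LinearMap.pi fun i => LinearMap.pi fun j =>
    ![0, (if i.val = 0 then e else 1) • ent R n i 0, 0,
      (if i.val + 1 = n then e else 1) • ent R n i 2] j

/-- The action of `Y` on the Heller lattice `Zₙ^∞` in the `𝒪`-basis `b_{i,j}`. -/
def opZiY (n : ℕ) (e : R) : (Fin n → Fin 4 → R) →ₗ[R] (Fin n → Fin 4 → R) :=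
  LinearMap.pi fun i => LinearMap.pi fun j =>
    ![0, entPred R n i 0, (if i.val + 1 = n then (1 : R) else e) • ent R n i 0,
      (if i.val = 0 then (1 : R) else e) • ent R n i 1 - entPred R n i 2] j

/-! ### The modules `M(λ)ₙ` and `M(∞)ₙ`, with underlying space `Fin n → Fin 2 → R`
(coordinate `(i,0)` is `u_{i+1}`, coordinate `(i,1)` is `v_{i+1}`). -/

def entm (n : ℕ) (i : Fin n) (j : Fin 2) : (Fin n → Fin 2 → R) →ₗ[R] R :=
  (LinearMap.proj j : (Fin 2 → R) →ₗ[R] R).comp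
    (LinearMap.proj i : (Fin n → Fin 2 → R) →ₗ[R] (Fin 2 → R))

def entmSucc (n : ℕ) (i : Fin n) (j : Fin 2) : (Fin n → Fin 2 → R) →ₗ[R] R :=
  if h : i.val + 1 < n then entm R n ⟨i.val + 1, h⟩ j else 0

/-- The standard basis vector of `M(λ)ₙ`/`M(∞)ₙ`: `(i,0) ↦ uᵢ`, `(i,1) ↦ vᵢ`. -/
def basm (n : ℕ) (i : Fin n) (j : Fin 2) : Fin n → Fin 2 → R :=
  Pi.single i (Pi.single j 1)

/-- `X` on `M(λ)ₙ` : `X·uᵢ = vᵢ`, `X·vᵢ = 0`. -/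
def opMlX (n : ℕ) : (Fin n → Fin 2 → R) →ₗ[R] (Fin n → Fin 2 → R) :=
  LinearMap.pi fun i => LinearMap.pi fun j => ![0, entm R n i 0] j

/-- `Y` on `M(λ)ₙ` : `Y·uᵢ = λvᵢ + v_{i−1}`, `Y·vᵢ = 0`. -/
def opMlY (n : ℕ) (l : R) : (Fin n → Fin 2 → R) →ₗ[R] (Fin n → Fin 2 → R) :=
  LinearMap.pi fun i => LinearMap.pi fun j => ![0, l • entm R n i 0 + entmSucc R n i 0] j

/-- `X` on `M(∞)ₙ` : `X·uᵢ = v_{i−1}`, `X·vᵢ = 0`. -/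
def opMiX (n : ℕ) : (Fin n → Fin 2 → R) →ₗ[R] (Fin n → Fin 2 → R) :=
  LinearMap.pi fun i => LinearMap.pi fun j => ![0, entmSucc R n i 0] j

/-- `Y` on `M(∞)ₙ` : `Y·uᵢ = vᵢ`, `Y·vᵢ = 0`. -/
def opMiY (n : ℕ) : (Fin n → Fin 2 → R) →ₗ[R] (Fin n → Fin 2 → R) :=
  LinearMap.pi fun i => LinearMap.pi fun j => ![0, entm R n i 0] j

/-! ### Projective covers. -/

/-- The projective cover `πₙ^λ : Aⁿ → M(λ)ₙ`, `eᵢ ↦ uᵢ` (extended `A`-linearly,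
an element of `Aⁿ` being recorded by its coordinates in the basis `eᵢ, Xeᵢ, Yeᵢ, XYeᵢ`). -/
def projCovMl (n : ℕ) (l : R) : (Fin n → Fin 4 → R) →ₗ[R] (Fin n → Fin 2 → R) :=
  ∑ k : Fin n, ∑ j : Fin 4,
    (ent R n k j).smulRight
      ((![LinearMap.id, opMlX R n, opMlY R n l, (opMlX R n) ∘ₗ (opMlY R n l)] j) (basm R n k 0))

/-- The projective cover `πₙ^∞ : Aⁿ → M(∞)ₙ`, `eᵢ ↦ uᵢ`. -/
def projCovMi (n : ℕ) : (Fin n → Fin 4 → R) →ₗ[R] (Fin n → Fin 2 → R) :=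
  ∑ k : Fin n, ∑ j : Fin 4,
    (ent R n k j).smulRight
      ((![LinearMap.id, opMiX R n, opMiY R n, (opMiX R n) ∘ₗ (opMiY R n)] j) (basm R n k 0))

/-- The projective cover `π_{n,λ} : A^{2n} → Zₙ^λ`, `e_{2k−1} ↦ a_{k,1}`, `e_{2k} ↦ a_{k,3}`. -/
def projCovZl (n : ℕ) (e l : R) : (Fin (2*n) → Fin 4 → R) →ₗ[R] (Fin n → Fin 4 → R) :=
  ∑ k : Fin n, ∑ j : Fin 4,
    ((ent R (2*n) ⟨2*k.val, by have := k.isLt; omega⟩ j).smulRight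
        ((![LinearMap.id, opZlX R n, opZlY R n e l, (opZlX R n) ∘ₗ (opZlY R n e l)] j)
          (bas R n k 0))
     + (ent R (2*n) ⟨2*k.val + 1, by have := k.isLt; omega⟩ j).smulRight
        ((![LinearMap.id, opZlX R n, opZlY R n e l, (opZlX R n) ∘ₗ (opZlY R n e l)] j)
          (bas R n k 2)))

/-- Images of the standard basis vectors of `A^{2n}` under `π_{n,∞}`:
`e₁ ↦ b_{1,1}`, `e₂ ↦ b_{1,2}`, `e_{2k+1} ↦ b_{k,3}` (`1 ≤ k ≤ n−1`),
`e_{2k} ↦ b_{k,1}` (`2 ≤ k ≤ n`)  (here `s` is the 0-based index of the basis vector). -/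
def tgtZi (n : ℕ) (s : Fin (2*n)) : Fin n → Fin 4 → R :=
  if s.val = 0 then bas R n ⟨0, by have := s.isLt; omega⟩ 0
  else if s.val = 1 then bas R n ⟨0, by have := s.isLt; omega⟩ 1
  else if s.val % 2 = 0 then bas R n ⟨s.val / 2 - 1, by have := s.isLt; omega⟩ 2
  else bas R n ⟨s.val / 2, by have := s.isLt; omega⟩ 0

/-- The projective cover `π_{n,∞} : A^{2n} → Zₙ^∞`. -/
def projCovZi (n : ℕ) (e : R) : (Fin (2*n) → Fin 4 → R) →ₗ[R] (Fin n → Fin 4 → R) :=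
  ∑ s : Fin (2*n), ∑ j : Fin 4,
    (ent R (2*n) s j).smulRight
      ((![LinearMap.id, opZiX R n e, opZiY R n e, (opZiX R n e) ∘ₗ (opZiY R n e)] j)
        (tgtZi R n s))

/-- The endomorphism `Φₙ` of `Zₙ^λ` (resp. `Zₙ^∞`): the unique `A`-endomorphism sending
`a_{n,1} ↦ a_{n,4}` (resp. `b_{n,1} ↦ b_{n,4}`) and `a_{k,1} ↦ 0` for `k < n`. -/
def PhiEnd (n : ℕ) : (Fin n → Fin 4 → R) →ₗ[R] (Fin n → Fin 4 → R) :=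
  LinearMap.pi fun i => LinearMap.pi fun j =>
    if i.val + 1 = n ∧ j = 3 then ent R n i 0 else 0

/-- The pull-back lattice `Eₙ^λ = {(x,y) ∈ A^{2n} ⊕ Zₙ^λ ∣ π_{n,λ}(x) = Φₙ^λ(y)}`. -/
def El (n : ℕ) (e l : R) :
    Submodule R ((Fin (2*n) → Fin 4 → R) × (Fin n → Fin 4 → R)) :=
  LinearMap.ker ((projCovZl R n e l) ∘ₗ (LinearMap.fst R _ _)
    - (PhiEnd R n) ∘ₗ (LinearMap.snd R _ _))

/-- The pull-back lattice `Eₙ^∞ = {(x,y) ∈ A^{2n} ⊕ Zₙ^∞ ∣ π_{n,∞}(x) = Φₙ^∞(y)}`. -/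
def Ei (n : ℕ) (e : R) :
    Submodule R ((Fin (2*n) → Fin 4 → R) × (Fin n → Fin 4 → R)) :=
  LinearMap.ker ((projCovZi R n e) ∘ₗ (LinearMap.fst R _ _)
    - (PhiEnd R n) ∘ₗ (LinearMap.snd R _ _))

end HellerKronecker


namespace HellerKronecker

def uVec {R : Type} [CommRing R] {n : ℕ} (c : Fin n → R) : Fin n → Fin 2 → R :=
  fun i => ![c i, 0]

theorem sum_basm {R : Type} [CommRing R] {n : ℕ} (c : Fin n → R) :
    ∑ k, c k • basm R n k 0 = uVec c := by
  funext i j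
  simp only [Finset.sum_apply, Pi.smul_apply, basm, uVec, smul_eq_mul]
  rw [Finset.sum_eq_single i]
  · fin_cases j <;> simp
  · intro b _ hb
    simp [Pi.single_eq_of_ne hb.symm]
  · simp

theorem projCovMl_eq {R : Type} [CommRing R] {n : ℕ} (l : R) (x : Fin n → Fin 4 → R) :
    projCovMl R n l x = uVec (fun k => x k 0) + opMlX R n (uVec fun k => x k 1)
      + opMlY R n l (uVec fun k => x k 2)
      + opMlX R n (opMlY R n l (uVec fun k => x k 3)) := by
  simp only [← sum_basm, map_sum, map_smul, ← Finset.sum_add_distrib]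
  simp [projCovMl, Fin.sum_univ_four, ent]

def nxt {R : Type} [CommRing R] {n : ℕ} (c : Fin n → R) (i : Fin n) : R :=
  if h : i.val + 1 < n then c ⟨i.val + 1, h⟩ else 0

theorem opMlX_apply {R : Type} [CommRing R] {n : ℕ} (m : Fin n → Fin 2 → R) (i : Fin n) :
    opMlX R n m i = ![0, m i 0] := by
  funext j
  fin_cases j <;> simp [opMlX, entm]

theorem opMlY_apply {R : Type} [CommRing R] {n : ℕ} (l : R) (m : Fin n → Fin 2 → R)
    (i : Fin n) :
    opMlY R n l m i = ![0, l * m i 0 + nxt (fun k => m k 0) i] := by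
  funext j
  fin_cases j
  · simp [opMlY]
  · by_cases h : i.val + 1 < n <;> simp [opMlY, entm, entmSucc, nxt, h]

theorem opAX_apply {R : Type} [CommRing R] {n : ℕ} (m : Fin n → Fin 4 → R) (i : Fin n) :
    opAX R n m i = ![0, m i 0, 0, m i 2] := by
  funext j
  fin_cases j <;> simp [opAX, ent]

theorem opAY_apply {R : Type} [CommRing R] {n : ℕ} (m : Fin n → Fin 4 → R) (i : Fin n) :
    opAY R n m i = ![0, 0, m i 0, m i 1] := by
  funext j
  fin_cases j <;> simp [opAY, ent]

theorem projCovMl_apply {R : Type} [CommRing R] {n : ℕ} (l : R) (x : Fin n → Fin 4 → R)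
    (i : Fin n) :
    projCovMl R n l x i = ![x i 0, x i 1 + (l * x i 2 + nxt (fun k => x k 2) i)] := by
  rw [projCovMl_eq]
  funext j
  fin_cases j <;> simp [opMlX_apply, opMlY_apply, uVec]

/-- The embedding of `M(-l)` into the free module. -/
def iotaMl (R : Type) [CommRing R] (n : ℕ) (l : R) :
    (Fin n → Fin 2 → R) →ₗ[R] (Fin n → Fin 4 → R) :=
  LinearMap.pi fun i => LinearMap.pi fun j =>
    ((-1 : R) ^ i.val) •
      ![0, (-l) • entm R n i 0 + entmSucc R n i 0, entm R n i 0, entm R n i 1] j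

theorem iotaMl_apply {R : Type} [CommRing R] {n : ℕ} (l : R) (m : Fin n → Fin 2 → R)
    (i : Fin n) :
    iotaMl R n l m i = ![0, (-1) ^ i.val * (-l * m i 0 + nxt (fun k => m k 0) i),
      (-1) ^ i.val * m i 0, (-1) ^ i.val * m i 1] := by
  funext j
  fin_cases j
  · simp [iotaMl]
  · by_cases h : i.val + 1 < n <;> simp [iotaMl, entm, entmSucc, nxt, h, mul_add]
  · simp [iotaMl, entm]
  · simp [iotaMl, entm]

theorem nxt_sign {R : Type} [CommRing R] {n : ℕ} (c : Fin n → R) (i : Fin n) :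
    nxt (fun k => (-1) ^ k.val * c k) i = - ((-1) ^ i.val * nxt c i) := by
  by_cases h : i.val + 1 < n <;> simp [nxt, h, pow_succ]

theorem sign_sq {R : Type} [CommRing R] (k : ℕ) (a : R) :
    (-1) ^ k * ((-1) ^ k * a) = a := by
  rw [← mul_assoc, ← mul_pow]; simp

end HellerKronecker

open HellerKronecker in
/-- Over `Ā = κ[X,Y]/(X²,Y²)`, the kernel of the projective cover
`πₙ^λ : Āⁿ → M(λ)ₙ`, `eᵢ ↦ uᵢ`, is isomorphic to `M(−λ)ₙ` as an `Ā`-module: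
there is an injective `Ā`-homomorphism `M(−λ)ₙ → Āⁿ` with image `ker πₙ^λ`. -/
theorem statement4 (κ : Type) [Field κ] [IsAlgClosed κ] (l : κ) (n : ℕ) (hn : 1 ≤ n) :
    Function.Surjective (projCovMl κ n l) ∧
    ∃ ι : (Fin n → Fin 2 → κ) →ₗ[κ] (Fin n → Fin 4 → κ),
      Function.Injective ι ∧
      ι ∘ₗ opMlX κ n = opAX κ n ∘ₗ ι ∧
      ι ∘ₗ opMlY κ n (-l) = opAY κ n ∘ₗ ι ∧
      LinearMap.range ι = LinearMap.ker (projCovMl κ n l) := by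
  refine ⟨?_, iotaMl κ n l, ?_, ?_, ?_, ?_⟩
  · intro m
    refine ⟨fun i => ![m i 0, m i 1, 0, 0], ?_⟩
    funext i j
    rw [projCovMl_apply]
    fin_cases j <;> simp [nxt]
  · intro m m' h
    funext i j
    have h' := congrFun h i
    rw [iotaMl_apply, iotaMl_apply] at h'
    have h2 := congrFun h' 2
    have h3 := congrFun h' 3
    fin_cases j
    · simpa using h2
    · simpa using h3
  · refine LinearMap.ext fun m => ?_
    funext i j
    simp only [LinearMap.comp_apply, iotaMl_apply, opAX_apply]
    fin_cases j <;> simp [opMlX_apply, nxt]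
  · refine LinearMap.ext fun m => ?_
    funext i j
    simp only [LinearMap.comp_apply, iotaMl_apply, opAY_apply]
    fin_cases j <;> simp [opMlY_apply, nxt]
  · ext x
    rw [LinearMap.mem_range, LinearMap.mem_ker]
    constructor
    · rintro ⟨m, rfl⟩
      funext i j
      rw [projCovMl_apply]
      simp only [iotaMl_apply]
      fin_cases j
      · simp
      · have := nxt_sign (fun k => m k 0) i
        simp [this]
        ring
    · intro h
      refine ⟨fun i => ![(-1) ^ i.val * x i 2, (-1) ^ i.val * x i 3], ?_⟩
      funext i j
      have h' := congrFun h i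
      rw [projCovMl_apply] at h'
      have h0 : x i 0 = 0 := by simpa using congrFun h' 0
      have h1 : x i 1 + (l * x i 2 + nxt (fun k => x k 2) i) = 0 := by
        simpa using congrFun h' 1
      rw [iotaMl_apply]
      fin_cases j
      · simp [h0]
      · have e := nxt_sign (fun k => x k 2) i
        have e1 := sign_sq i.val (x i 2)
        have e2 := sign_sq i.val (nxt (fun k => x k 2) i)
        simp only [Matrix.cons_val_zero, e]
        simp
        linear_combination (-l) * e1 - e2 - h1
      · simp [sign_sq]
      · simp [sign_sq]
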